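/- Every distance-regular graph with diameter 3 and intersection array {16,10,1;1,5,16} contains a 4-claw. -/

import Mathlib

open SimpleGraph Finset

/-- `G` is a distance-regular graph with diameter `D` and intersection numbers
`b i` (number of neighbours of `y` at distance `i+1` from `x` when `dist x y = i`) and
`c i` (number of neighbours of `y` at distance `i-1` from `x` when `dist x y = i`). -/
def IsDRG {V : Type*} [Fintype V] (G : SimpleGraph V) (D : ℕ) (b c : ℕ → ℕ) : Prop :=
  G.Connected ∧
  (∃ x y : V, G.dist x y = D) ∧
  (∀ x y : V, G.dist x y ≤ D) ∧
  c 0 = 0 ∧ c 1 = 1 ∧ b D = 0 ∧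
  (∀ i ≤ D, ∀ x y : V, G.dist x y = i →
    {z : V | G.Adj y z ∧ G.dist x z = i - 1}.ncard = c i ∧
    {z : V | G.Adj y z ∧ G.dist x z = i + 1}.ncard = b i)

/-- `G` contains a `t`-claw: a vertex together with `t` pairwise nonadjacent neighbours
(an induced `K_{1,t}`). -/
def HasClaw {V : Type*} (G : SimpleGraph V) (t : ℕ) : Prop :=
  ∃ (x : V) (s : Finset V), s.card = t ∧ (∀ y ∈ s, G.Adj x y) ∧
    (s : Set V).Pairwise fun y z => ¬ G.Adj y z

/-- `θ` is an eigenvalue of the (real) adjacency matrix of `G`. -/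
def IsAdjEigenvalue {V : Type*} [Fintype V] (G : SimpleGraph V) [DecidableRel G.Adj]
    (θ : ℝ) : Prop :=
  ∃ v : V → ℝ, v ≠ 0 ∧ (G.adjMatrix ℝ).mulVec v = θ • v

/-- `G` contains an induced quadrangle: vertices `x, z₁, y, z₂` with
`dist x y = dist z₁ z₂ = 2` inducing a 4-cycle. -/
def HasQuadrangle {V : Type*} (G : SimpleGraph V) : Prop :=
  ∃ x z₁ y z₂ : V, G.dist x y = 2 ∧ G.dist z₁ z₂ = 2 ∧
    G.Adj x z₁ ∧ G.Adj z₁ y ∧ G.Adj y z₂ ∧ G.Adj z₂ x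

/-- The diameter-3 intersection array `{β₀,β₁,β₂; γ₁,γ₂,γ₃}`. -/
def arr3 (b c : ℕ → ℕ) (β₀ β₁ β₂ γ₁ γ₂ γ₃ : ℕ) : Prop :=
  b 0 = β₀ ∧ b 1 = β₁ ∧ b 2 = β₂ ∧ c 1 = γ₁ ∧ c 2 = γ₂ ∧ c 3 = γ₃

/-!
Suppose there is no 4-claw. Fix an edge `xy`, let `N` be the set of the 5 common neighbours of `x`
and `y`, and `M` the set of the 10 other neighbours of `x` distinct from `y`. No three vertices of
`M` are pairwise nonadjacent, since together with `y` they would form a 4-claw at `x`. Hence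
Mantel's theorem bounds the number of nonadjacent pairs in `M`; as the local graph at `x` is
5-regular, counting its edges shows that `N` spans at least 5 edges.

On the other hand `-4` is an eigenvalue with cosine sequence `1, -1/4, 1/8, -1/2`. The matrix `W`
whose entries are the cosines of the distances is a multiple of the projection onto the eigenspace,
hence positive semidefinite. If `N` spans `e` edges, the quadratic form of `W`, scaled by `8`, takes
the value `240 - 54 * e` at the vector with value `5` on `x` and `y` and `3` on `N`, so `e ≤ 4`.
-/

section Interedges

variable {V : Type*} (G : SimpleGraph V) [DecidableRel G.Adj]

lemma card_interedges_eq_sum (s t : Finset V) :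
    #(G.interedges s t) = ∑ u ∈ s, #{v ∈ t | G.Adj u v} := by
  simp only [interedges_def, card_filter, sum_product]

lemma card_interedges_comm (s t : Finset V) :
    #(G.interedges s t) = #(G.interedges t s) :=
  have := G.symm
  Rel.card_interedges_comm s t

lemma card_interedges_singleton_right (s : Finset V) (y : V) :
    #(G.interedges s {y}) = #{v ∈ s | G.Adj y v} := by
  rw [card_interedges_comm, card_interedges_eq_sum, sum_singleton]

lemma card_interedges_union_right [DecidableEq V] (s : Finset V) {t t' : Finset V}
    (h : Disjoint t t') :
    #(G.interedges s (t ∪ t')) = #(G.interedges s t) + #(G.interedges s t') := by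
  simp only [card_interedges_eq_sum, ← sum_add_distrib, filter_union]
  exact sum_congr rfl fun u _ => card_union_of_disjoint (disjoint_filter_filter h)

lemma card_interedges_self_eq_two_mul_card_edgeFinset_induce (s : Finset V) :
    #(G.interedges s s) = 2 * #(G.induce (s : Set V)).edgeFinset := by
  rw [← sum_degrees_eq_twice_card_edges, card_interedges_eq_sum, ← sum_coe_sort s]
  refine Fintype.sum_congr _ _ fun u => ?_
  rw [← card_neighborFinset_eq_degree, neighborFinset_eq_filter, card_filter, card_filter,
    ← sum_coe_sort s]
  rfl

lemma card_interedges_add_card_interedges_compl_self [DecidableEq V] (s : Finset V) :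
    #(G.interedges s s) + #(Gᶜ.interedges s s) + #s = #s ^ 2 := by
  have hnonadj (u : V) (hu : u ∈ s) :
      #{v ∈ s | ¬ G.Adj u v} = #{v ∈ s | Gᶜ.Adj u v} + 1 := by
    rw [← card_insert_of_notMem (a := u) (by simp)]
    congr 1
    ext v
    by_cases hvu : v = u <;> simp [hvu, hu, Ne.symm]
  simp only [card_interedges_eq_sum, card_eq_sum_ones s, ← sum_add_distrib, sq, sum_mul,
    one_mul]
  refine sum_congr rfl fun u hu => ?_
  rw [add_assoc, ← hnonadj u hu, ← card_eq_sum_ones, card_filter_add_card_filter_not]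

variable {G}

/-- Mantel's theorem, where `G.interedges s s` counts every edge twice. -/
lemma two_mul_card_interedges_self_le_sq {s : Finset V} (hs : G.CliqueFreeOn s 3) :
    2 * #(G.interedges s s) ≤ #s ^ 2 := by
  have hturan := ((G.cliqueFree_induce_iff _ _).2 hs).card_edgeFinset_le
  have hchoose : (#s % 2).choose 2 = 0 := Nat.choose_eq_zero_of_lt (Nat.mod_lt _ two_pos)
  simp only [coe_sort_coe, Fintype.card_coe, hchoose] at hturan
  rw [card_interedges_self_eq_two_mul_card_edgeFinset_induce]
  omega

end Interedges

section InducedRegular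

variable {V : Type*} {G : SimpleGraph V} [DecidableRel G.Adj] {s : Finset V}

lemma card_interedges_of_regular {a : ℕ} (hreg : ∀ u ∈ s, #{v ∈ s | G.Adj u v} = a)
    {t : Finset V} (ht : t ⊆ s) : #(G.interedges t s) = #t * a := by
  rw [card_interedges_eq_sum, sum_congr rfl fun u hu => hreg u (ht hu), sum_const, smul_eq_mul]

variable [DecidableEq V] {y : V}

variable (G) in
lemma disjoint_filter_adj_filter_compl_adj :
    Disjoint {v ∈ s | G.Adj y v} {v ∈ s | Gᶜ.Adj y v} :=
  disjoint_filter.2 fun _ _ h h' => h'.2 h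

variable (G) in
lemma disjoint_filter_adj_union_filter_compl_adj_singleton :
    Disjoint ({v ∈ s | G.Adj y v} ∪ {v ∈ s | Gᶜ.Adj y v}) {y} := by
  simp

variable (G) in
lemma filter_adj_union_filter_compl_adj_union_singleton (hy : y ∈ s) :
    {v ∈ s | G.Adj y v} ∪ {v ∈ s | Gᶜ.Adj y v} ∪ {y} = s := by
  ext v
  by_cases hvy : v = y
  · simp [hvy, hy]
  · simp only [mem_union, mem_filter, mem_singleton, compl_adj]
    tauto

variable (G) in
lemma card_filter_adj_add_card_filter_compl_adj_add_one (hy : y ∈ s) :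
    #{v ∈ s | G.Adj y v} + #{v ∈ s | Gᶜ.Adj y v} + 1 = #s := by
  rw [← card_union_of_disjoint (disjoint_filter_adj_filter_compl_adj G), ← card_singleton y,
    ← card_union_of_disjoint (disjoint_filter_adj_union_filter_compl_adj_singleton G),
    filter_adj_union_filter_compl_adj_union_singleton G hy]

lemma card_interedges_filter_adj_add (t : Finset V) (hy : y ∈ s) :
    #(G.interedges t {v ∈ s | G.Adj y v}) + #(G.interedges t {v ∈ s | Gᶜ.Adj y v}) +
      #{v ∈ t | G.Adj y v} = #(G.interedges t s) := by
  rw [← card_interedges_singleton_right,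
    ← card_interedges_union_right _ _ (disjoint_filter_adj_filter_compl_adj G),
    ← card_interedges_union_right _ _ (disjoint_filter_adj_union_filter_compl_adj_singleton G),
    filter_adj_union_filter_compl_adj_union_singleton G hy]

lemma card_interedges_filter_compl_adj_of_regular {a : ℕ}
    (hreg : ∀ u ∈ s, #{v ∈ s | G.Adj u v} = a) (hy : y ∈ s) :
    #(G.interedges {v ∈ s | Gᶜ.Adj y v} {v ∈ s | Gᶜ.Adj y v}) + a * a =
      #{v ∈ s | Gᶜ.Adj y v} * a + a +
        #(G.interedges {v ∈ s | G.Adj y v} {v ∈ s | G.Adj y v}) := by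
  have hN := card_interedges_filter_adj_add (G := G) {v ∈ s | G.Adj y v} hy
  have hM := card_interedges_filter_adj_add (G := G) {v ∈ s | Gᶜ.Adj y v} hy
  rw [card_interedges_of_regular hreg (filter_subset _ _)] at hN hM
  have hMy : {v ∈ {v ∈ s | Gᶜ.Adj y v} | G.Adj y v} = ∅ := by
    simp only [filter_filter, filter_eq_empty_iff, compl_adj]
    tauto
  simp only [filter_filter, and_self, hreg y hy] at hN
  rw [hMy, card_empty, card_interedges_comm] at hM
  omega

lemma card_sq_add_le_of_regular_of_compl_cliqueFreeOn {a : ℕ}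
    (hreg : ∀ u ∈ s, #{v ∈ s | G.Adj u v} = a) (hfree : Gᶜ.CliqueFreeOn s 4) (hy : y ∈ s) :
    #{v ∈ s | Gᶜ.Adj y v} ^ 2 + 2 * (a * a) ≤
      2 * (#{v ∈ s | Gᶜ.Adj y v} * (a + 1) + a +
        #(G.interedges {v ∈ s | G.Adj y v} {v ∈ s | G.Adj y v})) := by
  have hregular := card_interedges_filter_compl_adj_of_regular hreg hy
  set M : Finset V := {v ∈ s | Gᶜ.Adj y v} with hM
  have hfreeM : Gᶜ.CliqueFreeOn M 3 := by
    rw [hM, coe_filter]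
    exact CliqueFreeOn.of_succ _ hfree hy
  have hmantel := two_mul_card_interedges_self_le_sq hfreeM
  have hcompl := card_interedges_add_card_interedges_compl_self G M
  rw [mul_add_one]
  omega

end InducedRegular

lemma compl_cliqueFreeOn_neighborSet {V : Type*} {G : SimpleGraph V} {t : ℕ}
    (hG : ¬ HasClaw G t) (x : V) : Gᶜ.CliqueFreeOn (G.neighborSet x) t := by
  rintro s hs hclique
  exact hG ⟨x, s, hclique.card_eq, hs, fun u hu v hv huv => (hclique.isClique hu hv huv).2⟩

section LinearAlgebra

open scoped Matrix

lemma posSemidef_of_mul_self_eq_smul {n : Type*} [Fintype n] {W : Matrix n n ℝ}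
    (hW : W.IsHermitian) {c : ℝ} (hsq : W * W = c • W) (htrace : 0 ≤ W.trace) : W.PosSemidef := by
  have hgram : Wᴴ * W = c • W := by rw [hW.eq, hsq]
  rcases le_or_gt c 0 with hc | hc
  · have hzero : (Wᴴ * W).trace = 0 := by
      refine le_antisymm ?_ (Matrix.posSemidef_conjTranspose_mul_self W).trace_nonneg
      rw [hgram, Matrix.trace_smul]
      exact mul_nonpos_of_nonpos_of_nonneg hc htrace
    rw [Matrix.trace_conjTranspose_mul_self_eq_zero_iff.1 hzero]
    exact .zero
  · rw [← inv_smul_smul₀ hc.ne' W, ← hgram]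
    exact (Matrix.posSemidef_conjTranspose_mul_self W).smul (inv_nonneg.2 hc.le)

lemma exists_mul_eq_smul_of_mem_adjoin {R A : Type*} [CommSemiring R] [Semiring A] [Algebra R A]
    {w a b : A} {r : R} (hw : w * a = r • w) (hb : b ∈ Algebra.adjoin R {a}) :
    ∃ c : R, w * b = c • w := by
  induction hb using Algebra.adjoin_induction with
  | mem x hx => exact ⟨r, by rw [Set.mem_singleton_iff.1 hx, hw]⟩
  | algebraMap c => exact ⟨c, by rw [← Algebra.commutes, Algebra.smul_def]⟩
  | add x z _ _ hx hz =>
    obtain ⟨p, hp⟩ := hx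
    obtain ⟨q, hq⟩ := hz
    exact ⟨p + q, by rw [mul_add, hp, hq, add_smul]⟩
  | mul x z _ _ hx hz =>
    obtain ⟨p, hp⟩ := hx
    obtain ⟨q, hq⟩ := hz
    exact ⟨p * q, by rw [← mul_assoc, hp, smul_mul_assoc, hq, smul_smul]⟩

end LinearAlgebra

section DistMatrix

variable {V : Type*} (G : SimpleGraph V) (u : ℕ → ℝ)

/-- The matrix whose `(x, y)` entry is `u (dist x y)`. On a graph of diameter `D` it is the
combination `∑ i ≤ D, u i • A i` of the distance matrices `A i = distMatrix G (Pi.single i 1)`. -/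
noncomputable def distMatrix : Matrix V V ℝ :=
  Matrix.of fun x y => u (G.dist x y)

lemma distMatrix_apply (x y : V) : distMatrix G u x y = u (G.dist x y) := rfl

lemma isHermitian_distMatrix : (distMatrix G u).IsHermitian := by
  ext x y
  simp [distMatrix_apply, G.dist_comm]

variable {G u}

lemma distMatrix_add (u v : ℕ → ℝ) :
    distMatrix G (u + v) = distMatrix G u + distMatrix G v := rfl

lemma distMatrix_smul (r : ℝ) (u : ℕ → ℝ) : distMatrix G (r • u) = r • distMatrix G u := rfl

lemma distMatrix_single_one [DecidableRel G.Adj] :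
    distMatrix G (Pi.single 1 1) = G.adjMatrix ℝ := by
  ext x y
  simp only [distMatrix_apply, Pi.single_apply, dist_eq_one_iff_adj, adjMatrix_apply]

lemma distMatrix_apply_self (x : V) : distMatrix G u x x = u 0 := by
  rw [distMatrix_apply, dist_self]

lemma distMatrix_apply_of_adj {x y : V} (hxy : G.Adj x y) : distMatrix G u x y = u 1 := by
  rw [distMatrix_apply, dist_eq_one_iff_adj.2 hxy]

lemma distMatrix_apply_of_not_adj {x y z : V} (hxy : G.Adj x y) (hxz : G.Adj x z) (hne : y ≠ z)
    (hyz : ¬ G.Adj y z) : distMatrix G u y z = u 2 := by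
  have hle : G.dist y z ≤ 2 := dist_le (.cons hxy.symm (.cons hxz .nil))
  have hpos : 0 < G.dist y z := (hxy.symm.reachable.trans hxz.reachable).pos_dist_of_ne hne
  have hne_one : G.dist y z ≠ 1 := fun h => hyz (dist_eq_one_iff_adj.1 h)
  rw [distMatrix_apply, show G.dist y z = 2 by omega]

lemma sum_sum_distMatrix_of_forall_adj [DecidableRel G.Adj] {x : V} {N : Finset V}
    (hN : ∀ z ∈ N, G.Adj x z) :
    ∑ y ∈ N, ∑ z ∈ N, distMatrix G u y z =
      #N * u 0 + #(G.interedges N N) * u 1 +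
        ((#N : ℝ) ^ 2 - #N - #(G.interedges N N)) * u 2 := by
  classical
  have hentry (y : V) (hy : y ∈ N) (z : V) (hz : z ∈ N) : distMatrix G u y z =
      u 2 + (if y = z then u 0 - u 2 else 0) + (if G.Adj y z then 1 else 0) * (u 1 - u 2) := by
    by_cases hyz : y = z
    · subst hyz
      simp [distMatrix_apply_self]
    · by_cases hadj : G.Adj y z
      · simp [distMatrix_apply_of_adj hadj, hyz, hadj]
      · simp [distMatrix_apply_of_not_adj (hN y hy) (hN z hz) hyz hadj, hyz, hadj]
  have hrow (y : V) (hy : y ∈ N) : ∑ z ∈ N, distMatrix G u y z =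
      #N * u 2 + (u 0 - u 2) + #{z ∈ N | G.Adj y z} * (u 1 - u 2) := by
    rw [sum_congr rfl (hentry y hy)]
    simp only [sum_add_distrib, ← sum_mul, sum_boole, sum_const, nsmul_eq_mul,
      sum_ite_eq, if_pos hy]
  rw [sum_congr rfl hrow, sum_add_distrib, ← sum_mul, ← Nat.cast_sum, ← card_interedges_eq_sum,
    sum_const, nsmul_eq_mul]
  ring

/-- The quadratic form is evaluated at the vector with value `α` on `x` and `y`, value `β` on `N`
and `0` elsewhere. -/
lemma quadraticForm_nonneg_of_posSemidef_distMatrix [Finite V] [DecidableRel G.Adj]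
    (hpos : (distMatrix G u).PosSemidef) {x y : V} (hxy : G.Adj x y) {N : Finset V}
    (hNx : ∀ z ∈ N, G.Adj x z) (hNy : ∀ z ∈ N, G.Adj y z) (α β : ℝ) :
    0 ≤ 2 * α ^ 2 * (u 0 + u 1) + 4 * α * β * #N * u 1 + β ^ 2 *
      (#N * u 0 + #(G.interedges N N) * u 1 +
        ((#N : ℝ) ^ 2 - #N - #(G.interedges N N)) * u 2) := by
  classical
  have := Fintype.ofFinite V
  let g : V → ℝ := fun z =>
    (if z = x then α else 0) + (if z = y then α else 0) + (if z ∈ N then β else 0)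
  have hdot (F : V → ℝ) : g ⬝ᵥ F = α * F x + α * F y + β * ∑ z ∈ N, F z := by
    simp [dotProduct, g, add_mul, sum_add_distrib, mul_sum]
  have hmulVec (z : V) : (distMatrix G u).mulVec g z =
      α * distMatrix G u z x + α * distMatrix G u z y + β * ∑ v ∈ N, distMatrix G u z v := by
    rw [Matrix.mulVec, dotProduct_comm, hdot]
  have hsum {w : V} (hw : ∀ z ∈ N, G.Adj w z) : ∑ z ∈ N, distMatrix G u w z = #N * u 1 := by
    rw [sum_congr rfl fun z hz => distMatrix_apply_of_adj (hw z hz), sum_const, nsmul_eq_mul]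
  have hsum' {w : V} (hw : ∀ z ∈ N, G.Adj w z) : ∑ z ∈ N, distMatrix G u z w = #N * u 1 := by
    rw [sum_congr rfl fun z hz => distMatrix_apply_of_adj (hw z hz).symm, sum_const,
      nsmul_eq_mul]
  have hform := hpos.dotProduct_mulVec_nonneg g
  simp only [star_trivial, hdot, hmulVec, sum_add_distrib, ← mul_sum, hsum hNx, hsum hNy,
    hsum' hNx, hsum' hNy, sum_sum_distMatrix_of_forall_adj hNx, distMatrix_apply_self,
    distMatrix_apply_of_adj hxy, distMatrix_apply_of_adj hxy.symm] at hform
  linarith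

end DistMatrix

lemma exists_adj_dist_eq_of_dist_eq_succ {V : Type*} {G : SimpleGraph V} {x y : V} {n : ℕ}
    (h : G.dist x y = n + 1) : ∃ z, G.Adj y z ∧ G.dist x z = n := by
  obtain ⟨p, hp⟩ := exists_walk_of_dist_ne_zero (G := G) (u := y) (v := x)
    (by rw [SimpleGraph.dist_comm]; omega)
  rw [SimpleGraph.dist_comm, h] at hp
  cases p with
  | nil => simp at hp
  | @cons _ z _ hyz q =>
    refine ⟨z, hyz, ?_⟩
    have hle : G.dist x z ≤ n := by
      rw [SimpleGraph.dist_comm]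
      exact (dist_le q).trans (by simpa using hp.le)
    have := hyz.diff_dist_adj (u := x)
    omega

/-- The action on sequences of the tridiagonal matrix with rows `(c i, a i, b i)`, where
`a i = b 0 - b i - c i`. The truncated index `i - 1` at `i = 0` is harmless, since `c 0 = 0`. -/
def intersectionOp (b c : ℕ → ℕ) (u : ℕ → ℝ) (i : ℕ) : ℝ :=
  c i * u (i - 1) + ((b 0 : ℝ) - b i - c i) * u i + b i * u (i + 1)

lemma intersectionOp_single_succ (b c : ℕ → ℕ) (j : ℕ) :
    intersectionOp b c (Pi.single (j + 1) 1) =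
      (c (j + 2) : ℝ) • Pi.single (j + 2) 1 +
        ((b 0 : ℝ) - b (j + 1) - c (j + 1)) • Pi.single (j + 1) 1 +
          (b j : ℝ) • Pi.single j 1 := by
  ext i
  simp only [intersectionOp, Pi.add_apply, Pi.smul_apply, Pi.single_apply, smul_eq_mul]
  grind

namespace IsDRG

variable {V : Type*} [Fintype V] {G : SimpleGraph V} {D : ℕ} {b c : ℕ → ℕ}

section Counting

lemma exists_dist_eq (hG : IsDRG G D b c) {i : ℕ} (hi : i ≤ D) : ∃ x y, G.dist x y = i := by
  induction hi using Nat.decreasingInduction with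
  | self => exact hG.2.1
  | of_succ _ _ ih =>
    obtain ⟨x, y, hxy⟩ := ih
    obtain ⟨z, -, hz⟩ := exists_adj_dist_eq_of_dist_eq_succ hxy
    exact ⟨x, z, hz⟩

variable [DecidableRel G.Adj]

lemma card_neighborFinset_dist_pred (hG : IsDRG G D b c) (x y : V) :
    #{z ∈ G.neighborFinset y | G.dist x z = G.dist x y - 1} = c (G.dist x y) := by
  rw [← (hG.2.2.2.2.2.2 _ (hG.2.2.1 x y) x y rfl).1, ← Set.ncard_coe_finset]
  simp

lemma card_neighborFinset_dist_succ (hG : IsDRG G D b c) (x y : V) :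
    #{z ∈ G.neighborFinset y | G.dist x z = G.dist x y + 1} = b (G.dist x y) := by
  rw [← (hG.2.2.2.2.2.2 _ (hG.2.2.1 x y) x y rfl).2, ← Set.ncard_coe_finset]
  simp

lemma isRegularOfDegree (hG : IsDRG G D b c) : G.IsRegularOfDegree (b 0) := fun y => by
  rw [← card_neighborFinset_eq_degree, ← dist_self (G := G) (v := y),
    ← hG.card_neighborFinset_dist_succ, dist_self, filter_true_of_mem]
  exact fun z hz => dist_eq_one_iff_adj.2 ((G.mem_neighborFinset y z).1 hz)

lemma sum_neighborFinset_dist (hG : IsDRG G D b c) (u : ℕ → ℝ) (x y : V) :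
    ∑ z ∈ G.neighborFinset y, u (G.dist x z) = intersectionOp b c u (G.dist x y) := by
  set i := G.dist x y with hi
  have hterm (z : V) (hz : z ∈ G.neighborFinset y) : u (G.dist x z) =
      u i + (if G.dist x z = i - 1 then 1 else 0) * (u (i - 1) - u i) +
        (if G.dist x z = i + 1 then 1 else 0) * (u (i + 1) - u i) := by
    rcases ((G.mem_neighborFinset y z).1 hz).diff_dist_adj (u := x) with h | h | h <;>
      rw [← hi] at h <;> rw [h]
    · rcases Nat.eq_zero_or_pos i with h0 | h0
      · simp [h0]
      · simp [show i ≠ i - 1 by omega]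
    · simp [show i + 1 ≠ i - 1 by omega]
    · simp [show i - 1 ≠ i + 1 by omega]
  rw [sum_congr rfl hterm, sum_add_distrib, sum_add_distrib, ← sum_mul, ← sum_mul, sum_boole,
    sum_boole, hG.card_neighborFinset_dist_pred, hG.card_neighborFinset_dist_succ, sum_const,
    card_neighborFinset_eq_degree, hG.isRegularOfDegree.degree_eq, nsmul_eq_mul, intersectionOp]
  ring

lemma card_commonNeighbors_add (hG : IsDRG G D b c) {x y : V} (hxy : G.Adj x y) :
    #{z ∈ G.neighborFinset y | G.Adj x z} + b 1 + c 1 = b 0 := by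
  have hsum := hG.sum_neighborFinset_dist (Pi.single 1 1) x y
  simp only [Pi.single_apply, dist_eq_one_iff_adj, sum_boole, dist_eq_one_iff_adj.2 hxy,
    intersectionOp] at hsum
  norm_num at hsum
  rw [← Nat.cast_inj (R := ℝ)]
  push_cast
  linarith

end Counting

section BoseMesner

lemma c_pos (hG : IsDRG G D b c) {i : ℕ} (hi : i + 1 ≤ D) : 0 < c (i + 1) := by
  classical
  obtain ⟨x, y, hxy⟩ := hG.exists_dist_eq hi
  obtain ⟨z, hyz, hz⟩ := exists_adj_dist_eq_of_dist_eq_succ hxy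
  rw [← hxy, ← hG.card_neighborFinset_dist_pred, card_pos]
  exact ⟨z, by simp [hyz, hz, hxy]⟩

lemma distMatrix_congr (hG : IsDRG G D b c) {u v : ℕ → ℝ} (huv : ∀ i ≤ D, u i = v i) :
    distMatrix G u = distMatrix G v := by
  ext x y
  exact huv _ (hG.2.2.1 x y)

lemma distMatrix_single_zero [DecidableEq V] (hG : IsDRG G D b c) :
    distMatrix G (Pi.single 0 1) = 1 := by
  ext x y
  simp only [distMatrix_apply, Pi.single_apply, hG.1.dist_eq_zero_iff, Matrix.one_apply]

lemma distMatrix_eq_sum (hG : IsDRG G D b c) (u : ℕ → ℝ) :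
    distMatrix G u = ∑ i ∈ range (D + 1), u i • distMatrix G (Pi.single i 1) := by
  ext x y
  have hxy : G.dist x y < D + 1 := Nat.lt_succ_of_le (hG.2.2.1 x y)
  simp [Matrix.sum_apply, distMatrix_apply, Pi.single_apply, hxy]

variable [DecidableRel G.Adj]

lemma distMatrix_mul_adjMatrix (hG : IsDRG G D b c) (u : ℕ → ℝ) :
    distMatrix G u * G.adjMatrix ℝ = distMatrix G (intersectionOp b c u) := by
  ext x y
  rw [mul_adjMatrix_apply]
  exact hG.sum_neighborFinset_dist u x y

variable [DecidableEq V]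

lemma distMatrix_single_mem_adjoin (hG : IsDRG G D b c) (j : ℕ) (hj : j ≤ D) :
    distMatrix G (Pi.single j 1) ∈ Algebra.adjoin ℝ {G.adjMatrix ℝ} := by
  induction j using Nat.twoStepInduction with
  | zero => rw [hG.distMatrix_single_zero]; exact one_mem _
  | one => rw [distMatrix_single_one]; exact Algebra.self_mem_adjoin_singleton _ _
  | more j ihj ihj' =>
    have hc : (c (j + 2) : ℝ) ≠ 0 := Nat.cast_ne_zero.2 (hG.c_pos hj).ne'
    have hrec := hG.distMatrix_mul_adjMatrix (Pi.single (j + 1) 1)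
    rw [intersectionOp_single_succ, distMatrix_add, distMatrix_add, distMatrix_smul,
      distMatrix_smul, distMatrix_smul, ← sub_eq_iff_eq_add, ← sub_eq_iff_eq_add] at hrec
    rw [← inv_smul_smul₀ hc (distMatrix G (Pi.single (j + 2) 1)), ← hrec]
    have ihj := ihj (by omega)
    have ihj' := ihj' (by omega)
    exact Subalgebra.smul_mem _ (sub_mem (sub_mem
      (mul_mem ihj' (Algebra.self_mem_adjoin_singleton _ _))
      (Subalgebra.smul_mem _ ihj _)) (Subalgebra.smul_mem _ ihj' _)) _

lemma distMatrix_mem_adjoin (hG : IsDRG G D b c) (u : ℕ → ℝ) :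
    distMatrix G u ∈ Algebra.adjoin ℝ {G.adjMatrix ℝ} := by
  rw [hG.distMatrix_eq_sum]
  exact sum_mem fun i hi => Subalgebra.smul_mem _
    (hG.distMatrix_single_mem_adjoin i (Nat.lt_succ_iff.1 (mem_range.1 hi))) _

end BoseMesner

/-- Since `W = distMatrix G u` is a polynomial in the adjacency matrix `A` and `W * A = θ • W`, it
satisfies `W * W = c • W` for some `c`. -/
lemma posSemidef_distMatrix (hG : IsDRG G D b c) {u : ℕ → ℝ} {θ : ℝ}
    (hu : ∀ i ≤ D, intersectionOp b c u i = θ * u i) (hu0 : 0 ≤ u 0) :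
    (distMatrix G u).PosSemidef := by
  classical
  have heigen : distMatrix G u * G.adjMatrix ℝ = θ • distMatrix G u := by
    rw [hG.distMatrix_mul_adjMatrix, ← distMatrix_smul]
    exact hG.distMatrix_congr hu
  obtain ⟨c, hsq⟩ := exists_mul_eq_smul_of_mem_adjoin heigen (hG.distMatrix_mem_adjoin u)
  refine posSemidef_of_mul_self_eq_smul (isHermitian_distMatrix G u) hsq ?_
  exact sum_nonneg fun x _ => hu0.trans_eq (distMatrix_apply_self x).symm

end IsDRG

/-- `8` times the cosine sequence of the eigenvalue `-4` of a distance-regular graph with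
intersection array `{16,10,1;1,5,16}`. -/
def cosineSeqNegFour : ℕ → ℝ
  | 0 => 8
  | 1 => -2
  | 2 => 1
  | _ => -4

lemma intersectionOp_cosineSeqNegFour {b c : ℕ → ℕ} (harr : arr3 b c 16 10 1 1 5 16)
    (hc : c 0 = 0) (hb : b 3 = 0) {i : ℕ} (hi : i ≤ 3) :
    intersectionOp b c cosineSeqNegFour i = -4 * cosineSeqNegFour i := by
  obtain ⟨hb0, hb1, hb2, hc1, hc2, hc3⟩ := harr
  interval_cases i <;>
    norm_num [intersectionOp, cosineSeqNegFour, hb0, hb1, hb2, hb, hc, hc1, hc2, hc3]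

lemma card_interedges_commonNeighbors_le {V : Type*} [Fintype V] {G : SimpleGraph V}
    [DecidableRel G.Adj] {b c : ℕ → ℕ} (hG : IsDRG G 3 b c)
    (harr : arr3 b c 16 10 1 1 5 16) {x y : V} (hxy : G.Adj x y) {N : Finset V} (hN : #N = 5)
    (hNx : ∀ z ∈ N, G.Adj x z) (hNy : ∀ z ∈ N, G.Adj y z) :
    #(G.interedges N N) ≤ 8 := by
  have hpos : (distMatrix G cosineSeqNegFour).PosSemidef :=
    hG.posSemidef_distMatrix (fun _ => intersectionOp_cosineSeqNegFour harr hG.2.2.2.1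
      hG.2.2.2.2.2.1) (by norm_num [cosineSeqNegFour])
  have hform := quadraticForm_nonneg_of_posSemidef_distMatrix hpos hxy hNx hNy 5 3
  norm_num [cosineSeqNegFour, hN] at hform
  have hform' : (27 : ℝ) * #(G.interedges N N) ≤ 240 := by linarith
  norm_cast at hform'
  omega

/-- every DRG of diameter 3 with intersection array `{16,10,1;1,5,16}`
contains a 4-claw. -/
theorem statement18 {V : Type*} [Fintype V] (G : SimpleGraph V) (b c : ℕ → ℕ)
    (hdrg : IsDRG G 3 b c) (harr : arr3 b c 16 10 1 1 5 16) :
    HasClaw G 4 := by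
  classical
  by_contra hclaw
  obtain ⟨x, y, hdist⟩ := hdrg.exists_dist_eq (i := 1) (by norm_num)
  have hxy : G.Adj x y := dist_eq_one_iff_adj.1 hdist
  have ⟨hb0, hb1, _, hc1, _, _⟩ := harr
  have hlocal (z : V) (hz : z ∈ G.neighborFinset x) :
      #{v ∈ G.neighborFinset x | G.Adj z v} = 5 := by
    have := hdrg.card_commonNeighbors_add ((G.mem_neighborFinset x z).1 hz).symm
    omega
  have hy : y ∈ G.neighborFinset x := (G.mem_neighborFinset x y).2 hxy
  have hfree : Gᶜ.CliqueFreeOn (G.neighborFinset x) 4 := by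
    rw [coe_neighborFinset]
    exact compl_cliqueFreeOn_neighborSet hclaw x
  have hlower := card_sq_add_le_of_regular_of_compl_cliqueFreeOn hlocal hfree hy
  have hM := card_filter_adj_add_card_filter_compl_adj_add_one G hy
  rw [hlocal y hy, card_neighborFinset_eq_degree, hdrg.isRegularOfDegree.degree_eq, hb0] at hM
  rw [show #{v ∈ G.neighborFinset x | Gᶜ.Adj y v} = 10 by omega] at hlower
  have hupper := card_interedges_commonNeighbors_le hdrg harr hxy (hlocal y hy)
    (by simp +contextual) (by simp)
  omega
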